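/- arXiv:2310.10241 — 2 statements merged into one kernel-verified Lean document; each statement's English description precedes it below -/
import Mathlib

section
/- Let A be a nonempty finite subset of an abelian semigroup (G,+). For h ≥ 1 set d_h = |hA|, and set d_0 = 1. Then d_{h+1} ≤ d_h^⟨h⟩ for all h ≥ 1. -/
open scoped Pointwise

/-- `macaulay h a` is the Macaulay operator `a ↦ a^⟨h⟩`, computed via the greedy
construction of the `h`-binomial representation of `a`: writing
`a = C(a_h,h) + C(a_{h-1},h-1) + ⋯ + C(a_1,1)` with `a_h > a_{h-1} > ⋯ > a_1 ≥ 0`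
(where `a_h` is the largest integer with `C(a_h,h) ≤ a`, and so on), one sets
`a^⟨h⟩ = C(a_h+1,h+1) + C(a_{h-1}+1,h) + ⋯ + C(a_1+1,2)`, and `0^⟨h⟩ = 0`. -/
def macaulay : ℕ → ℕ → ℕ
  | 0, _ => 0
  | h + 1, a =>
    if a = 0 then 0
    else
      let m := Nat.findGreatest (fun k => Nat.choose k (h + 1) ≤ a) (a + h + 1)
      Nat.choose (m + 1) (h + 2) + macaulay h (a - Nat.choose m (h + 1))

/-- The `h`-fold iterated sumset `hA = A + ⋯ + A` (`h` summands), for `h ≥ 1`.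
(The value at `h = 0` is irrelevant; it is set to `A` by convention.) -/
def iterSumset {G : Type*} [AddCommSemigroup G] (A : Set G) : ℕ → Set G
  | 0 => A
  | 1 => A
  | h + 2 => iterSumset A (h + 1) + A

/-- The lower companion `a ↦ a_⟨h⟩ = C(a_h-1,h) + ⋯ + C(a_1-1,1)` of the Macaulay operator. -/
def green : ℕ → ℕ → ℕ
  | 0, _ => 0
  | h + 1, a =>
    if a = 0 then 0
    else
      let m := Nat.findGreatest (fun k => Nat.choose k (h + 1) ≤ a) (a + h + 1)
      Nat.choose (m - 1) (h + 1) + green h (a - Nat.choose m (h + 1))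

theorem macaulay_zero_right (h : ℕ) : macaulay h 0 = 0 := by
  cases h <;> simp [macaulay]

theorem green_zero_right (h : ℕ) : green h 0 = 0 := by
  cases h <;> simp [green]

theorem sub_le_choose (h k : ℕ) : k - h ≤ k.choose (h + 1) := by
  induction k with
  | zero => simp
  | succ k ih =>
    rcases lt_or_ge k h with hk | hk
    · omega
    · have := Nat.choose_pos hk
      rw [Nat.choose_succ_succ']
      omega

theorem findGreatest_choose {h m a : ℕ} (h1 : m.choose (h + 1) ≤ a)
    (h2 : a < (m + 1).choose (h + 1)) :
    Nat.findGreatest (fun k => k.choose (h + 1) ≤ a) (a + h + 1) = m := by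
  rw [Nat.findGreatest_eq_iff]
  refine ⟨?_, fun _ => h1, fun n hn _ hc => ?_⟩
  · have := sub_le_choose h m
    omega
  · have := Nat.choose_le_choose (h + 1) (show m + 1 ≤ n from hn)
    omega

theorem macaulay_choose_add {h m r : ℕ} (hr : r < m.choose h) :
    macaulay (h + 1) (m.choose (h + 1) + r) = (m + 1).choose (h + 2) + macaulay h r := by
  have hm : h ≤ m := by
    by_contra! hc
    simp [Nat.choose_eq_zero_of_lt hc] at hr
  rw [macaulay]
  split_ifs with h0
  · obtain ⟨h1, rfl⟩ := Nat.add_eq_zero_iff.1 h0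
    rw [Nat.choose_eq_zero_iff] at h1
    rw [macaulay_zero_right, Nat.choose_eq_zero_of_lt (by omega)]
  · rw [findGreatest_choose (m := m) (by omega) (by rw [Nat.choose_succ_succ']; omega)]
    simp

theorem green_choose_add {h m r : ℕ} (hr : r < m.choose h) :
    green (h + 1) (m.choose (h + 1) + r) = (m - 1).choose (h + 1) + green h r := by
  rw [green]
  split_ifs with h0
  · obtain ⟨h1, rfl⟩ := Nat.add_eq_zero_iff.1 h0
    rw [Nat.choose_eq_zero_iff] at h1
    rw [green_zero_right, Nat.choose_eq_zero_of_lt (by omega)]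
  · rw [findGreatest_choose (m := m) (by omega) (by rw [Nat.choose_succ_succ']; omega)]
    simp

/-- The leading term of the binomial representation. -/
theorem exists_choose_add (h a : ℕ) :
    ∃ m r, h ≤ m ∧ r < m.choose h ∧ a = m.choose (h + 1) + r := by
  let m := Nat.findGreatest (fun k => k.choose (h + 1) ≤ a) (a + h + 1)
  have h1 : m.choose (h + 1) ≤ a :=
    Nat.findGreatest_spec (P := fun k => k.choose (h + 1) ≤ a) (m := h) (by omega) (by simp)
  have hm : h ≤ m := Nat.le_findGreatest (by omega) (by simp)
  have h2 : a < (m + 1).choose (h + 1) := by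
    by_contra! hc
    rcases lt_or_ge m (a + h + 1) with hlt | hge
    · exact Nat.findGreatest_is_greatest (P := fun k => k.choose (h + 1) ≤ a)
        (Nat.lt_succ_self m) hlt hc
    · have := sub_le_choose h (m + 1)
      omega
  rw [Nat.choose_succ_succ'] at h2
  exact ⟨m, a - m.choose (h + 1), hm, by omega, by omega⟩

theorem macaulay_one (a : ℕ) : macaulay 1 a = (a + 1).choose 2 := by
  have := macaulay_choose_add (h := 0) (m := a) (r := 0) (by simp)
  simpa [macaulay_zero_right] using this

theorem green_one (p : ℕ) : green 1 p = p - 1 := by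
  simpa [green_zero_right] using green_choose_add (h := 0) (m := p) (r := 0) (by simp)

theorem macaulay_choose (h m : ℕ) :
    macaulay (h + 1) (m.choose (h + 1)) = (m + 1).choose (h + 2) := by
  rcases lt_or_ge m h with hm | hm
  · rw [Nat.choose_eq_zero_of_lt (by omega), Nat.choose_eq_zero_of_lt (by omega),
      macaulay_zero_right]
  · simpa [macaulay_zero_right] using macaulay_choose_add (h := h) (m := m) (r := 0)
      (Nat.choose_pos hm)

theorem le_of_choose_add_le {h m n r t : ℕ} (ht : t < n.choose h)
    (hle : m.choose (h + 1) + r ≤ n.choose (h + 1) + t) : m ≤ n := by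
  by_contra! hc
  have := Nat.choose_le_choose (h + 1) (show n + 1 ≤ m from hc)
  rw [Nat.choose_succ_succ'] at this
  omega

theorem macaulay_strictMono (h : ℕ) : StrictMono (macaulay (h + 1)) := by
  induction h with
  | zero =>
    refine strictMono_nat_of_lt_succ fun a => ?_
    rw [macaulay_one, macaulay_one, Nat.choose_succ_succ' (a + 1)]
    simp
  | succ h ih =>
    intro a b hab
    obtain ⟨m, r, hm, hr, rfl⟩ := exists_choose_add (h + 1) a
    obtain ⟨n, t, hn, ht, rfl⟩ := exists_choose_add (h + 1) b
    rw [macaulay_choose_add hr, macaulay_choose_add ht]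
    rcases (le_of_choose_add_le ht hab.le).eq_or_lt with rfl | hmn
    · have := ih (show r < t by omega)
      omega
    · have h1 := ih hr
      rw [macaulay_choose] at h1
      have h2 := Nat.choose_le_choose (h + 1 + 2) (show m + 2 ≤ n + 1 by omega)
      rw [Nat.choose_succ_succ' (m + 1)] at h2
      simp only [Nat.add_assoc, Nat.reduceAdd] at *
      omega

theorem macaulay_mono (h : ℕ) : Monotone (macaulay h) := by
  cases h with
  | zero => intro a b _; simp [macaulay]
  | succ h => exact (macaulay_strictMono h).monotone

theorem green_lt_choose {h m r : ℕ} (hm : h ≤ m) (hr : r < (m + 1).choose h) :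
    green h r < m.choose h := by
  induction h generalizing m r with
  | zero => simp [green]
  | succ h ih =>
    obtain ⟨n, t, hn, ht, rfl⟩ := exists_choose_add h r
    have hnm : n ≤ m := by
      by_contra! hc
      have := Nat.choose_le_choose (h + 1) (show m + 1 ≤ n from hc)
      omega
    rw [green_choose_add ht]
    rcases hn.eq_or_lt with rfl | hlt
    · have : t = 0 := by simpa using ht
      subst this
      rw [green_zero_right, Nat.choose_eq_zero_of_lt (by omega)]
      exact Nat.choose_pos hm
    · obtain ⟨k, rfl⟩ : ∃ k, n = k + 1 := ⟨n - 1, by omega⟩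
      have h1 := ih (show h ≤ k by omega) ht
      have h2 := Nat.choose_le_choose (h + 1) hnm
      rw [Nat.choose_succ_succ'] at h2
      simp only [Nat.add_sub_cancel] at *
      omega

theorem macaulay_green_add {h r : ℕ} (hr : h = 0 → r = 0) :
    macaulay h (green h r) + r = macaulay h r := by
  induction h generalizing r with
  | zero => simp [hr rfl, macaulay]
  | succ h ih =>
    obtain ⟨n, t, hn, ht, rfl⟩ := exists_choose_add h r
    rw [macaulay_choose_add ht, green_choose_add ht]
    have ht0 : h = 0 → t = 0 := by
      rintro rfl
      simpa using ht
    rcases hn.eq_or_lt with rfl | hlt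
    · have : t = 0 := by simpa using ht
      subst this
      simp [green_zero_right, macaulay_zero_right, Nat.choose_eq_zero_of_lt]
    · obtain ⟨k, rfl⟩ : ∃ k, n = k + 1 := ⟨n - 1, by omega⟩
      rw [Nat.add_sub_cancel, macaulay_choose_add (green_lt_choose (by omega) ht),
        Nat.choose_succ_succ' (k + 1), ← ih ht0]
      simp only [Nat.add_assoc, Nat.reduceAdd]
      omega

theorem le_green_add_choose {h m r : ℕ} (hr : r < (m + 1).choose (h + 1)) :
    r ≤ green (h + 1) r + m.choose h := by
  induction h generalizing m r with
  | zero =>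
    rw [green_one, Nat.choose_zero_right]
    omega
  | succ h ih =>
    obtain ⟨n, t, hn, ht, rfl⟩ := exists_choose_add (h + 1) r
    have hnm : n ≤ m := by
      by_contra! hc
      have := Nat.choose_le_choose (h + 1 + 1) (show m + 1 ≤ n from hc)
      omega
    rw [green_choose_add ht]
    obtain ⟨k, rfl⟩ : ∃ k, n = k + 1 := ⟨n - 1, by omega⟩
    have h1 := ih ht
    have h2 := Nat.choose_le_choose (h + 1) hnm
    rw [Nat.choose_succ_succ'] at h2 ⊢
    simp only [Nat.add_sub_cancel] at *
    omega

theorem green_le (h r : ℕ) : green h r ≤ r := by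
  induction h generalizing r with
  | zero => simp [green]
  | succ h ih =>
    obtain ⟨n, t, hn, ht, rfl⟩ := exists_choose_add h r
    rw [green_choose_add ht]
    exact Nat.add_le_add (Nat.choose_le_choose _ (Nat.sub_le n 1)) (ih t)

theorem green_lt {h r : ℕ} (hr : 0 < r) : green (h + 1) r < r := by
  obtain ⟨n, t, hn, ht, rfl⟩ := exists_choose_add h r
  rw [green_choose_add ht]
  rcases hn.eq_or_lt with rfl | hlt
  · simp at ht hr
    omega
  · obtain ⟨k, rfl⟩ : ∃ k, n = k + 1 := ⟨n - 1, by omega⟩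
    have h1 := Nat.choose_pos (show h ≤ k by omega)
    have h2 := green_le h t
    rw [Nat.choose_succ_succ']
    simp only [Nat.add_sub_cancel]
    omega

theorem macaulay_sub_green_lt {h p : ℕ} (hp : 0 < p) :
    macaulay h (p - green (h + 1) p - 1) < p := by
  induction h generalizing p with
  | zero => simpa [macaulay] using hp
  | succ h ih =>
    obtain ⟨m, r, hm, hr, rfl⟩ := exists_choose_add (h + 1) p
    rw [green_choose_add hr]
    obtain ⟨k, rfl⟩ : ∃ k, m = k + 1 := ⟨m - 1, by omega⟩
    have hgr := le_green_add_choose hr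
    rw [Nat.choose_succ_succ' k (h + 1)]
    simp only [Nat.add_sub_cancel]
    rcases r.eq_zero_or_pos with rfl | hr0
    · have hk : 0 < k.choose (h + 1) := by
        refine Nat.choose_pos ?_
        by_contra! hc
        rw [Nat.choose_eq_zero_of_lt (by omega)] at hp
        omega
      have h1 := macaulay_strictMono h (show k.choose (h + 1) - 1 < k.choose (h + 1) by omega)
      rw [macaulay_choose, Nat.choose_succ_succ'] at h1
      rw [green_zero_right]
      simp only [Nat.add_zero, Nat.add_sub_cancel]
      exact h1
    · have h1 := ih hr0
      have hlt : green (h + 1) r < r := green_lt hr0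
      have h2 := macaulay_choose_add (h := h) (m := k) (r := r - green (h + 1) r - 1) (by omega)
      rw [show k.choose (h + 1) + k.choose (h + 1 + 1) + r -
        (k.choose (h + 1 + 1) + green (h + 1) r) - 1 =
        k.choose (h + 1) + (r - green (h + 1) r - 1) by omega, h2, Nat.choose_succ_succ']
      omega

theorem le_green_of_le_macaulay {h p c : ℕ} (hc : c ≤ p) (hp : p ≤ macaulay h (p - c)) :
    c ≤ green (h + 1) p := by
  rcases p.eq_zero_or_pos with rfl | hp0
  · omega
  by_contra! hlt
  have h1 := macaulay_mono h (show p - c ≤ p - green (h + 1) p - 1 by omega)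
  have h2 := macaulay_sub_green_lt (h := h) hp0
  omega

/-- Change the `i`-th exponent of the monomial `m` to `e`, compensating with the `j`-th one. -/
def slide {σ : Type*} [DecidableEq σ] (i j : σ) (m : σ → ℕ) (e : ℕ) : σ → ℕ :=
  Function.update (Function.update m i e) j (m i + m j - e)

section Compression

variable {σ : Type*} [DecidableEq σ] {i j : σ} {m : σ → ℕ} {e d : ℕ} {s : Finset σ}

theorem slide_apply_left (hij : i ≠ j) : slide i j m e i = e := by
  simp [slide, hij]

theorem slide_apply_right : slide i j m e j = m i + m j - e := by
  simp [slide]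

theorem slide_apply_of_ne {l : σ} (hi : l ≠ i) (hj : l ≠ j) : slide i j m e l = m l := by
  simp [slide, hi, hj]

theorem slide_self (hij : i ≠ j) : slide i j m (m i) = m := by
  ext l
  by_cases hj : l = j
  · subst hj; simp [slide]
  · by_cases hi : l = i
    · subst hi; simp [slide, hij]
    · exact slide_apply_of_ne hi hj

theorem slide_slide (hij : i ≠ j) (he : e ≤ m i + m j) :
    slide i j (slide i j m e) = slide i j m := by
  ext f l
  by_cases hj : l = j
  · subst hj
    simp only [slide_apply_right, slide_apply_left hij]
    omega
  · by_cases hi : l = i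
    · subst hi; simp only [slide_apply_left hij]
    · simp only [slide_apply_of_ne hi hj]

theorem slide_apply_add (hij : i ≠ j) (he : e ≤ m i + m j) :
    slide i j m e i + slide i j m e j = m i + m j := by
  rw [slide_apply_left hij, slide_apply_right]
  omega

theorem add_le_of_mem_piAntidiag (hij : i ≠ j) (hi : i ∈ s) (hj : j ∈ s)
    (hm : m ∈ s.piAntidiag d) : m i + m j ≤ d := by
  rw [Finset.mem_piAntidiag] at hm
  rw [← hm.1, ← Finset.sum_pair hij]
  exact Finset.sum_le_sum_of_subset (by simp [Finset.insert_subset_iff, hi, hj])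

theorem slide_mem_piAntidiag (hij : i ≠ j) (hi : i ∈ s) (hj : j ∈ s) (he : e ≤ m i + m j)
    (hm : m ∈ s.piAntidiag d) : slide i j m e ∈ s.piAntidiag d := by
  rw [Finset.mem_piAntidiag] at hm ⊢
  have hj' : j ∈ s.erase i := Finset.mem_erase.2 ⟨hij.symm, hj⟩
  refine ⟨?_, fun l hl => ?_⟩
  · rw [← hm.1, ← Finset.add_sum_erase _ _ hi, ← Finset.add_sum_erase _ _ hi,
      ← Finset.add_sum_erase _ _ hj', ← Finset.add_sum_erase _ _ hj', ← add_assoc, ← add_assoc,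
      slide_apply_add hij he]
    congr 1
    refine Finset.sum_congr rfl fun l hl => ?_
    simp only [Finset.mem_erase] at hl
    exact slide_apply_of_ne hl.2.1 hl.1
  · by_cases hlj : l = j
    · exact hlj ▸ hj
    · by_cases hli : l = i
      · exact hli ▸ hi
      · rw [slide_apply_of_ne hli hlj] at hl
        exact hm.2 l hl

open Classical in
/-- The number of `e < m i` such that sliding `m` to `e` gives an element of `N`. -/
noncomputable def slideRank (i j : σ) (N : Finset (σ → ℕ)) (m : σ → ℕ) : ℕ :=
  Nat.count (fun e => slide i j m e ∈ N) (m i)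

open Classical in
/-- The number of elements of `N` on the `i`-`j`-line through `m`. -/
noncomputable def slideCount (i j : σ) (N : Finset (σ → ℕ)) (m : σ → ℕ) : ℕ :=
  Nat.count (fun e => slide i j m e ∈ N) (m i + m j + 1)

open Classical in
/-- Push all elements of `N` as far as possible from `i` to `j`. -/
noncomputable def compress (i j : σ) (N : Finset (σ → ℕ)) : Finset (σ → ℕ) :=
  N.image fun m => slide i j m (slideRank i j N m)

variable {M N : Finset (σ → ℕ)}

theorem slideRank_le : slideRank i j N m ≤ m i := by
  classical
  exact Nat.count_le _

theorem slideRank_le_add : slideRank i j N m ≤ m i + m j := slideRank_le.trans (Nat.le_add_right _ _)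

theorem mem_compress (hij : i ≠ j) : m ∈ compress i j N ↔ m i < slideCount i j N m := by
  classical
  simp only [compress, Finset.mem_image]
  constructor
  · rintro ⟨m, hm, rfl⟩
    rw [slideCount, slide_slide hij slideRank_le_add, slide_apply_add hij slideRank_le_add,
      slide_apply_left hij]
    refine Nat.count_strict_mono (p := fun e => slide i j m e ∈ N) ?_ (by omega)
    rwa [slide_self hij]
  · intro h
    set p : ℕ → Prop := fun e => slide i j m e ∈ N with hp
    have h' : m i < Nat.count p (m i + m j + 1) := by
      rw [slideCount] at h
      convert h
    have h1 : Nat.nth p (m i) < m i + m j + 1 := Nat.nth_lt_of_lt_count h'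
    have h2 : ∀ hf : (Set.ofPred p).Finite, m i < hf.toFinset.card := fun hf =>
      h'.trans_le (Nat.count_le_card hf _)
    refine ⟨slide i j m (Nat.nth p (m i)), Nat.nth_mem _ h2, ?_⟩
    have h3 : slideRank i j N (slide i j m (Nat.nth p (m i))) = m i := by
      rw [slideRank, slide_slide hij (by omega), slide_apply_left hij]
      convert Nat.count_nth h2
    rw [h3, slide_slide hij (by omega), slide_self hij]

theorem injOn_slide_slideRank (hij : i ≠ j) :
    Set.InjOn (fun m => slide i j m (slideRank i j N m)) (N : Set (σ → ℕ)) := by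
  classical
  intro m hm m' hm' h
  simp only at h
  have h1 : slide i j m = slide i j m' := by
    rw [← slide_slide hij slideRank_le_add (m := m), h, slide_slide hij slideRank_le_add]
  have h2 : slideRank i j N m = slideRank i j N m' := by
    have := congrFun h i
    rwa [slide_apply_left hij, slide_apply_left hij] at this
  rw [slideRank, slideRank, h1] at h2
  have h3 : m i = m' i := by
    refine Nat.count_injective ?_ ?_ h2
    · rwa [← h1, slide_self hij]
    · rwa [slide_self hij]
  rw [← slide_self hij (m := m), h1, h3, slide_self hij]

theorem card_compress (hij : i ≠ j) : (compress i j N).card = N.card := by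
  classical
  exact Finset.card_image_of_injOn (injOn_slide_slideRank hij)

theorem compress_subset_piAntidiag (hij : i ≠ j) (hi : i ∈ s) (hj : j ∈ s)
    (hN : N ⊆ s.piAntidiag d) : compress i j N ⊆ s.piAntidiag d := by
  intro m hm
  simp only [compress, Finset.mem_image] at hm
  obtain ⟨m, hm, rfl⟩ := hm
  exact slide_mem_piAntidiag hij hi hj slideRank_le_add (hN hm)

/-- A two-variable shadow bound. -/
theorem min_count_le_count {p q : ℕ → Prop} [DecidablePred p] [DecidablePred q] {k : ℕ}
    (h1 : ∀ e ≤ k, p e → q e) (h2 : ∀ e, p (e + 1) → q e) :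
    min (Nat.count p (k + 2)) (k + 1) ≤ Nat.count q (k + 1) := by
  by_cases hall : ∀ g < k + 2, p g
  · rw [(Nat.count_iff_forall (p := q) (n := k + 1)).2
      fun g hg => h1 g (by omega) (hall g (by omega))]
    exact min_le_right _ _
  · push Not at hall
    obtain ⟨g, hg, hpg⟩ := hall
    refine (min_le_left _ _).trans ?_
    rw [Nat.count_eq_card_filter_range, Nat.count_eq_card_filter_range]
    refine Finset.card_le_card_of_injOn (fun e => if e < g then e else e - 1) ?_ ?_
    · intro e he
      simp only [Finset.coe_filter, Finset.mem_range, Set.mem_ofPred_eq] at he ⊢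
      have hne : e ≠ g := by
        rintro rfl
        exact hpg he.2
      split_ifs with h
      · exact ⟨by omega, h1 e (by omega) he.2⟩
      · refine ⟨by omega, h2 _ ?_⟩
        rw [Nat.sub_add_cancel (by omega)]
        exact he.2
    · intro e he f hf hef
      simp only [Finset.coe_filter, Finset.mem_range, Set.mem_ofPred_eq] at he hf hef
      have he' : e ≠ g := by
        rintro rfl
        exact hpg he.2
      have hf' : f ≠ g := by
        rintro rfl
        exact hpg hf.2
      split_ifs at hef <;> omega

theorem slide_add_single_left (hij : i ≠ j) (he : e ≤ m i + m j) :
    slide i j (m + Pi.single i 1) e = slide i j m e + Pi.single j 1 := by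
  ext l
  by_cases hj : l = j
  · subst hj
    simp [slide_apply_right, hij.symm]
    omega
  · by_cases hi : l = i
    · subst hi; simp [slide_apply_left hij, hij]
    · simp [slide_apply_of_ne hi hj, hi, hj]

theorem slide_add_single_left_succ (hij : i ≠ j) :
    slide i j (m + Pi.single i 1) (e + 1) = slide i j m e + Pi.single i 1 := by
  ext l
  by_cases hj : l = j
  · subst hj
    simp [slide_apply_right, hij.symm]
    omega
  · by_cases hi : l = i
    · subst hi; simp [slide_apply_left hij]
    · simp [slide_apply_of_ne hi hj, hi]

theorem slide_add_single_comm (hij : i ≠ j) :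
    slide i j (m + Pi.single i 1) = slide i j (m + Pi.single j 1) := by
  ext e l
  by_cases hj : l = j
  · subst hj
    simp [slide_apply_right, hij, hij.symm]
    omega
  · by_cases hi : l = i
    · subst hi; simp [slide_apply_left hij]
    · simp [slide_apply_of_ne hi hj, hi, hj]

theorem slide_add_single_of_ne {l : σ} (hi : l ≠ i) (hj : l ≠ j) :
    slide i j (m + Pi.single l 1) e = slide i j m e + Pi.single l 1 := by
  ext t
  by_cases htj : t = j
  · subst htj
    simp [slide_apply_right, hi.symm, hj.symm]
  · by_cases hti : t = i
    · subst hti; simp [slide, htj, hi.symm]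
    · simp [slide_apply_of_ne hti htj]

theorem compress_shadow (hij : i ≠ j) (hMN : ∀ m l, m + Pi.single l 1 ∈ M → m ∈ N) (m : σ → ℕ)
    (l : σ) (h : m + Pi.single l 1 ∈ compress i j M) : m ∈ compress i j N := by
  classical
  rw [mem_compress hij, slideCount] at h ⊢
  have key : min (Nat.count (fun e => slide i j (m + Pi.single i 1) e ∈ M) (m i + m j + 2))
      (m i + m j + 1) ≤ Nat.count (fun e => slide i j m e ∈ N) (m i + m j + 1) := by
    refine min_count_le_count (fun e he hM => hMN _ j ?_) (fun e hM => hMN _ i ?_)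
    · rwa [← slide_add_single_left hij he]
    · rwa [← slide_add_single_left_succ hij]
  by_cases hi : l = i
  · subst hi
    simp only [Pi.add_apply, Pi.single_eq_same, Pi.single_eq_of_ne hij.symm, add_zero] at h
    rw [show m l + 1 + m j + 1 = m l + m j + 2 by omega] at h
    exact (lt_min ((Nat.lt_succ_self _).trans h) (by omega)).trans_le key
  · by_cases hj : l = j
    · subst hj
      rw [← slide_add_single_comm hij] at h
      simp only [Pi.add_apply, Pi.single_eq_same, Pi.single_eq_of_ne hij, add_zero] at h
      rw [show m i + (m l + 1) + 1 = m i + m l + 2 by omega] at h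
      exact (lt_min h (by omega)).trans_le key
    · simp only [Pi.add_apply, Pi.single_eq_of_ne (Ne.symm hi), Pi.single_eq_of_ne (Ne.symm hj),
        add_zero, slide_add_single_of_ne hi hj] at h
      refine h.trans_le ?_
      exact Nat.count_mono_left fun e _ he => hMN _ _ he

theorem sum_compress_lt (hij : i ≠ j) (hi : i ∈ s) (hj : j ∈ s) (hN : N ⊆ s.piAntidiag d)
    (hm : m + Pi.single i 1 ∈ N) (hm' : m + Pi.single j 1 ∉ N) :
    ∑ u ∈ compress i j N, (d - u j) < ∑ u ∈ N, (d - u j) := by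
  classical
  rw [compress, Finset.sum_image (injOn_slide_slideRank hij)]
  refine Finset.sum_lt_sum (fun u _ => ?_) ⟨_, hm, ?_⟩
  · rw [slide_apply_right]
    have := slideRank_le (i := i) (j := j) (N := N) (m := u)
    omega
  · set u := m + Pi.single i 1 with hu
    rw [slide_apply_right]
    have h1 := slideRank_le (i := i) (j := j) (N := N) (m := u)
    have h2 := add_le_of_mem_piAntidiag hij hi hj (hN hm)
    have h3 : slideRank i j N u ≠ u i := by
      intro h
      rw [slideRank, Nat.count_iff_forall] at h
      have h4 := h (m i) (by simp [hu])
      rw [hu, slide_add_single_left hij (by omega), slide_self hij] at h4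
      exact hm' h4
    omega

/-- Every pair of consecutive layers of a multicomplex can be replaced by one of the same sizes
whose lower layer is closed under replacing any variable by `j`. -/
theorem exists_stable {h : ℕ} (hj : j ∈ s) (hM : M ⊆ s.piAntidiag (h + 1))
    (hN : N ⊆ s.piAntidiag h) (hMN : ∀ m l, m + Pi.single l 1 ∈ M → m ∈ N) :
    ∃ M' N' : Finset (σ → ℕ), M'.card = M.card ∧ N'.card = N.card ∧
      M' ⊆ s.piAntidiag (h + 1) ∧ N' ⊆ s.piAntidiag h ∧
      (∀ m l, m + Pi.single l 1 ∈ M' → m ∈ N') ∧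
      ∀ (m : σ → ℕ), ∀ i ∈ s, m + Pi.single i 1 ∈ N' → m + Pi.single j 1 ∈ N' := by
  induction hw : ∑ u ∈ N, (h - u j) using Nat.strong_induction_on generalizing M N with
  | _ w ih =>
    by_cases hst : ∀ (m : σ → ℕ), ∀ i ∈ s, m + Pi.single i 1 ∈ N → m + Pi.single j 1 ∈ N
    · exact ⟨M, N, rfl, rfl, hM, hN, hMN, hst⟩
    · push Not at hst
      obtain ⟨m, i, hi, hm, hm'⟩ := hst
      have hij : i ≠ j := by
        rintro rfl
        exact hm' hm
      obtain ⟨M', N', h1, h2, h3⟩ := ih _ (hw ▸ sum_compress_lt hij hi hj hN hm hm')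
        (compress_subset_piAntidiag hij hi hj hM) (compress_subset_piAntidiag hij hi hj hN)
        (compress_shadow hij hMN) rfl
      exact ⟨M', N', h1.trans (card_compress hij), h2.trans (card_compress hij), h3⟩

end Compression

section Macaulay

variable {σ : Type*} [DecidableEq σ] {j : σ} {h : ℕ} {s : Finset σ} {M N : Finset (σ → ℕ)}

open Classical in
/-- The monomials whose product with the variable `j` lies in `N`. -/
noncomputable def colon (j : σ) (N : Finset (σ → ℕ)) : Finset (σ → ℕ) :=
  {m ∈ N | m j ≠ 0}.image fun m => m - Pi.single j 1

theorem sub_single_add_single {m : σ → ℕ} (hm : m j ≠ 0) :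
    m - Pi.single j 1 + Pi.single j 1 = m := by
  ext l
  by_cases hl : l = j
  · subst hl
    simp
    omega
  · simp [hl]

theorem mem_colon {m : σ → ℕ} : m ∈ colon j N ↔ m + Pi.single j 1 ∈ N := by
  simp only [colon, Finset.mem_image, Finset.mem_filter]
  constructor
  · rintro ⟨u, ⟨hu, hu0⟩, rfl⟩
    rwa [sub_single_add_single hu0]
  · exact fun hm => ⟨_, ⟨hm, by simp⟩, add_tsub_cancel_right _ _⟩

theorem card_filter_add_card_colon (j : σ) (N : Finset (σ → ℕ)) :
    {m ∈ N | m j = 0}.card + (colon j N).card = N.card := by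
  classical
  have h1 : (colon j N).card = {m ∈ N | m j ≠ 0}.card := by
    refine Finset.card_image_of_injOn fun m hm u hu hmu => ?_
    simp only [Finset.coe_filter, Set.mem_ofPred_eq] at hm hu hmu
    rw [← sub_single_add_single hm.2, hmu, sub_single_add_single hu.2]
  rw [h1, Finset.card_filter_add_card_filter_not]

theorem mem_piAntidiag_of_add_single {m : σ → ℕ}
    (hm : m + Pi.single j 1 ∈ s.piAntidiag (h + 1)) : m ∈ s.piAntidiag h := by
  rw [Finset.mem_piAntidiag] at hm ⊢
  have hj : j ∈ s := hm.2 j (by simp)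
  refine ⟨?_, fun l hl => hm.2 l (by simp [hl])⟩
  have := hm.1
  simp only [Pi.add_apply, Finset.sum_add_distrib, Finset.sum_pi_single', hj, if_true] at this
  exact Nat.succ_injective this

theorem colon_subset_piAntidiag (hN : N ⊆ s.piAntidiag (h + 1)) :
    colon j N ⊆ s.piAntidiag h := fun _ hm =>
  mem_piAntidiag_of_add_single (hN (mem_colon.1 hm))

theorem filter_subset_piAntidiag (hj : j ∉ s) (hN : N ⊆ (insert j s).piAntidiag h) :
    {m ∈ N | m j = 0} ⊆ s.piAntidiag h := by
  intro m hm
  rw [Finset.mem_filter] at hm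
  have h1 := hN hm.1
  rw [Finset.mem_piAntidiag] at h1 ⊢
  rw [Finset.sum_insert hj, hm.2, zero_add] at h1
  refine ⟨h1.1, fun l hl => Finset.mem_of_mem_insert_of_ne (h1.2 l hl) ?_⟩
  rintro rfl
  exact hl hm.2

theorem card_filter_le_green_one (hN : N ⊆ s.piAntidiag 1)
    (hst : ∀ (m : σ → ℕ), ∀ i ∈ s, m + Pi.single i 1 ∈ N → m + Pi.single j 1 ∈ N) :
    {m ∈ N | m j = 0}.card ≤ green 1 N.card := by
  rw [green_one]
  rcases N.eq_empty_or_nonempty with rfl | ⟨m, hm⟩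
  · simp
  · have hex : ∃ i ∈ s, m i ≠ 0 := by
      by_contra! hc
      have h1 := (Finset.mem_piAntidiag.1 (hN hm)).1
      rw [Finset.sum_eq_zero hc] at h1
      omega
    obtain ⟨i, hi, hmi⟩ := hex
    have h1 := hst (m - Pi.single i 1) i hi (by rwa [sub_single_add_single hmi])
    have h2 : 0 < (colon j N).card := Finset.card_pos.2 ⟨_, mem_colon.2 h1⟩
    have h3 := card_filter_add_card_colon j N
    omega

theorem card_filter_le_green_succ (hN : N ⊆ s.piAntidiag (h + 1))
    (hst : ∀ (m : σ → ℕ), ∀ i ∈ s, m + Pi.single i 1 ∈ N → m + Pi.single j 1 ∈ N)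
    (ih : ∀ {M N : Finset (σ → ℕ)}, M ⊆ s.piAntidiag (h + 1) → N ⊆ s.piAntidiag h →
      (∀ m l, m + Pi.single l 1 ∈ M → m ∈ N) → M.card ≤ macaulay h N.card) :
    {m ∈ N | m j = 0}.card ≤ green (h + 1) N.card := by
  refine le_green_of_le_macaulay (Finset.card_filter_le _ _) ?_
  rw [← card_filter_add_card_colon j N, Nat.add_sub_cancel_left, card_filter_add_card_colon]
  refine ih hN (colon_subset_piAntidiag hN) fun m l hm => mem_colon.2 (hst m l ?_ hm)
  exact (Finset.mem_piAntidiag.1 (hN hm)).2 l (by simp)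

theorem card_le_macaulay_of_filter_le (hh : 1 ≤ h) (hMN : ∀ m l, m + Pi.single l 1 ∈ M → m ∈ N)
    (hM : {m ∈ M | m j = 0}.card ≤ macaulay h {m ∈ N | m j = 0}.card)
    (hN : {m ∈ N | m j = 0}.card ≤ green h N.card) : M.card ≤ macaulay h N.card := by
  have h1 : (colon j M).card ≤ N.card :=
    Finset.card_le_card fun m hm => hMN _ _ (mem_colon.1 hm)
  have h2 := card_filter_add_card_colon j M
  have h3 := macaulay_mono h hN
  have h4 := macaulay_green_add (h := h) (r := N.card) (by omega)
  omega

/-- Macaulay's theorem for two consecutive layers of a multicomplex. -/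
theorem card_le_macaulay (hh : 1 ≤ h) (hM : M ⊆ s.piAntidiag (h + 1)) (hN : N ⊆ s.piAntidiag h)
    (hMN : ∀ m l, m + Pi.single l 1 ∈ M → m ∈ N) : M.card ≤ macaulay h N.card := by
  induction h, hh using Nat.le_induction generalizing s M N with
  | base =>
    induction s using Finset.induction_on generalizing M N with
    | empty => simp_all
    | insert j s hj ih =>
      obtain ⟨M', N', h1, h2, hM', hN', hMN', hst⟩ :=
        exists_stable (Finset.mem_insert_self j s) hM hN hMN
      rw [← h1, ← h2]
      refine card_le_macaulay_of_filter_le (j := j) le_rfl hMN' (ih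
        (filter_subset_piAntidiag hj hM') (filter_subset_piAntidiag hj hN') fun m l hm => ?_)
        (card_filter_le_green_one hN' hst)
      simp only [Finset.mem_filter, Pi.add_apply] at hm ⊢
      exact ⟨hMN' _ _ hm.1, by omega⟩
  | succ h hh ihh =>
    induction s using Finset.induction_on generalizing M N with
    | empty => simp_all
    | insert j s hj ih =>
      obtain ⟨M', N', h1, h2, hM', hN', hMN', hst⟩ :=
        exists_stable (Finset.mem_insert_self j s) hM hN hMN
      rw [← h1, ← h2]
      refine card_le_macaulay_of_filter_le (j := j) (by omega) hMN' (ih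
        (filter_subset_piAntidiag hj hM') (filter_subset_piAntidiag hj hN') fun m l hm => ?_)
        (card_filter_le_green_succ hN' hst ihh)
      simp only [Finset.mem_filter, Pi.add_apply] at hm ⊢
      exact ⟨hMN' _ _ hm.1, by omega⟩

end Macaulay

section Sumset

variable {G : Type*} [AddCommSemigroup G] {n : ℕ}

/-- The sum in `G`, with a zero adjoined, encoded by an exponent vector. -/
def evalSum (a : Fin n → G) (m : Fin n → ℕ) : WithZero G :=
  ∑ i, m i • (a i : WithZero G)

theorem evalSum_add_single (a : Fin n → G) (m : Fin n → ℕ) (l : Fin n) :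
    evalSum a (m + Pi.single l 1) = evalSum a m + a l := by
  simp [evalSum, add_smul, Finset.sum_add_distrib, Pi.single_apply, ite_smul]

theorem exists_add_single {h : ℕ} {m : Fin n → ℕ} (hm : m ∈ Finset.univ.piAntidiag (h + 1)) :
    ∃ u ∈ Finset.univ.piAntidiag h, ∃ l : Fin n, m = u + Pi.single l 1 := by
  have hex : ∃ l, m l ≠ 0 := by
    by_contra! hc
    simp [hc] at hm
  obtain ⟨l, hl⟩ := hex
  have h1 := sub_single_add_single hl
  refine ⟨_, ?_, l, h1.symm⟩
  rw [← h1] at hm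
  exact mem_piAntidiag_of_add_single hm

theorem add_single_mem_piAntidiag {h : ℕ} {m : Fin n → ℕ} {l : Fin n}
    (hm : m ∈ Finset.univ.piAntidiag h) : m + Pi.single l 1 ∈ Finset.univ.piAntidiag (h + 1) := by
  simp only [Finset.mem_piAntidiag, Finset.mem_univ, implies_true, and_true] at hm ⊢
  simp [Finset.sum_add_distrib, hm]

theorem image_evalSum (a : Fin n → G) (h : ℕ) :
    evalSum a '' (Finset.univ.piAntidiag (h + 1) : Finset (Fin n → ℕ)) =
      (fun x : G => (x : WithZero G)) '' iterSumset (Set.range a) (h + 1) := by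
  induction h with
  | zero =>
    ext x
    simp only [Set.mem_image, Finset.mem_coe, iterSumset, Set.mem_range, exists_exists_eq_and]
    constructor
    · rintro ⟨m, hm, rfl⟩
      obtain ⟨u, hu, l, rfl⟩ := exists_add_single hm
      refine ⟨l, ?_⟩
      have : u = 0 := by simpa using hu
      subst this
      rw [evalSum_add_single]
      simp [evalSum]
    · rintro ⟨l, rfl⟩
      refine ⟨0 + Pi.single l 1, add_single_mem_piAntidiag (by simp), ?_⟩
      rw [evalSum_add_single]
      simp [evalSum]
  | succ h ih =>
    ext x
    rw [iterSumset]
    simp only [Set.mem_image, Finset.mem_coe, Set.mem_add, Set.mem_range]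
    constructor
    · rintro ⟨m, hm, rfl⟩
      obtain ⟨u, hu, l, rfl⟩ := exists_add_single hm
      obtain ⟨y, hy, hyu⟩ := ih.subset ⟨u, hu, rfl⟩
      refine ⟨_, ⟨y, hy, _, ⟨l, rfl⟩, rfl⟩, ?_⟩
      rw [evalSum_add_single, ← hyu, WithZero.coe_add]
    · rintro ⟨_, ⟨y, hy, _, ⟨l, rfl⟩, rfl⟩, rfl⟩
      obtain ⟨u, hu, hyu⟩ := ih.superset ⟨y, hy, rfl⟩
      refine ⟨_, add_single_mem_piAntidiag (l := l) hu, ?_⟩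
      rw [evalSum_add_single, hyu, WithZero.coe_add]

open Classical in
/-- The lexicographically least representatives of the values of `evalSum a` in degree `h`. -/
noncomputable def leastReps (a : Fin n → G) (h : ℕ) : Finset (Fin n → ℕ) :=
  {m ∈ Finset.univ.piAntidiag h | ∀ u ∈ Finset.univ.piAntidiag h,
    evalSum a u = evalSum a m → toLex m ≤ toLex u}

theorem mem_leastReps {a : Fin n → G} {h : ℕ} {m : Fin n → ℕ} :
    m ∈ leastReps a h ↔ m ∈ Finset.univ.piAntidiag h ∧ ∀ u ∈ Finset.univ.piAntidiag h,
      evalSum a u = evalSum a m → toLex m ≤ toLex u := by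
  classical
  simp only [leastReps, Finset.mem_filter]

theorem leastReps_subset (a : Fin n → G) (h : ℕ) :
    leastReps a h ⊆ Finset.univ.piAntidiag h := fun _ hm => (mem_leastReps.1 hm).1

theorem mem_leastReps_of_add_single {a : Fin n → G} {h : ℕ} (m : Fin n → ℕ) (l : Fin n)
    (hm : m + Pi.single l 1 ∈ leastReps a (h + 1)) : m ∈ leastReps a h := by
  rw [mem_leastReps] at hm ⊢
  refine ⟨mem_piAntidiag_of_add_single hm.1, fun u hu hum => ?_⟩
  have h1 := hm.2 _ (add_single_mem_piAntidiag (l := l) hu)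
    (by rw [evalSum_add_single, evalSum_add_single, hum])
  rw [toLex_add, toLex_add] at h1
  exact le_of_add_le_add_right h1

theorem card_leastReps (a : Fin n → G) (h : ℕ) :
    (leastReps a (h + 1)).card = Nat.card (iterSumset (Set.range a) (h + 1)) := by
  have hinj : Set.InjOn (evalSum a) (leastReps a (h + 1)) := by
    intro m hm u hu hmu
    rw [Finset.mem_coe, mem_leastReps] at hm hu
    exact toLex.injective ((hm.2 u hu.1 hmu.symm).antisymm (hu.2 m hm.1 hmu))
  have himg : evalSum a '' (leastReps a (h + 1)) =
      evalSum a '' (Finset.univ.piAntidiag (h + 1) : Finset (Fin n → ℕ)) := by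
    classical
    refine (Set.image_mono (Finset.coe_subset.2 (leastReps_subset a _))).antisymm ?_
    rintro _ ⟨m, hm, rfl⟩
    obtain ⟨u, hu, hmin⟩ := Finset.exists_min_image
      {u ∈ Finset.univ.piAntidiag (h + 1) | evalSum a u = evalSum a m} toLex
      ⟨m, by simpa using hm⟩
    rw [Finset.mem_filter] at hu
    refine ⟨u, ?_, hu.2⟩
    rw [Finset.mem_coe, mem_leastReps]
    exact ⟨hu.1, fun v hv hvu => hmin v (Finset.mem_filter.2 ⟨hv, hvu.trans hu.2⟩)⟩
  rw [← Set.ncard_coe_finset, ← hinj.ncard_image, himg, image_evalSum,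
    Set.ncard_image_of_injective _ WithZero.coe_injective]
  rfl

end Sumset

/-- Let `A` be a nonempty finite subset of an abelian semigroup `(G,+)`. For `h ≥ 1` set
`d_h = |hA|`, and set `d_0 = 1`. Then `d_{h+1} ≤ d_h^⟨h⟩` for all `h ≥ 1`. -/
theorem stmt0 {G : Type*} [AddCommSemigroup G] (A : Set G) (hfin : A.Finite)
    (hne : A.Nonempty) (d : ℕ → ℕ) (hd0 : d 0 = 1)
    (hd : ∀ h : ℕ, 1 ≤ h → d h = Nat.card (iterSumset A h)) :
    ∀ h : ℕ, 1 ≤ h → d (h + 1) ≤ macaulay h (d h) := by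
  intro h hh
  have := hfin.fintype
  obtain ⟨k, rfl⟩ : ∃ k, h = k + 1 := ⟨h - 1, by omega⟩
  have hA : A = Set.range fun i => ((Fintype.equivFin A).symm i : G) := by
    rw [← Function.comp_def, Set.range_comp, (Fintype.equivFin A).symm.surjective.range_eq]
    simp
  rw [hd _ hh, hd _ (by omega), hA, ← card_leastReps, ← card_leastReps]
  exact card_le_macaulay hh (leastReps_subset _ _) (leastReps_subset _ _)
    mem_leastReps_of_add_single
end

section
/- Let G = ℕ^n and B = {e_1,...,e_n} ⊂ G, where e_i is the i-th canonical basis vector. For all h ≥ 1 and all subsets A ⊆ hB (the set of elements of ℕ^n with coordinate sum h), we have |A + B| ≥ |A^lex + B|, where A^lex ⊆ hB is the unique initial segment of hB of cardinality |A| with respect to the lexicographic order on ℕ^n in which earlier coordinates dominate. -/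
open scoped Pointwise

/-- The lexicographic order on vectors of `ℕ^n` in which earlier coordinates dominate:
`vlexLe v u` means `v ≤ u`, i.e. `v = u` or, at the first coordinate where `v, u`
differ, `v` is smaller. -/
def vlexLe {n : ℕ} (v u : Fin n → ℕ) : Prop :=
  v = u ∨ ∃ j : Fin n, v j < u j ∧ ∀ k, k < j → v k = u k

namespace LexSegment

open Finset

section Segments

variable {α β : Type*} [LinearOrder α] {f : β → α} {X S T : Finset β}

/-- `S` is an initial segment of `X`, where larger values of `f` come first. -/
def IsSegment (f : β → α) (X S : Finset β) : Prop :=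
  S ⊆ X ∧ ∀ u ∈ S, ∀ v ∈ X, f u ≤ f v → v ∈ S

lemma exists_isSegment [DecidableEq β] (hf : Function.Injective f) (X : Finset β) (m : ℕ)
    (hm : m ≤ #X) : ∃ T, IsSegment f X T ∧ #T = m := by
  induction m with
  | zero => exact ⟨∅, ⟨by simp, by simp⟩, rfl⟩
  | succ m ih =>
    obtain ⟨T, ⟨hTX, hT⟩, hc⟩ := ih (by omega)
    have hne : (X \ T).Nonempty := by
      rw [← card_pos, card_sdiff_of_subset hTX]
      omega
    obtain ⟨x, hx, hmax⟩ := exists_max_image (X \ T) f hne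
    rw [mem_sdiff] at hx
    refine ⟨insert x T, ⟨insert_subset hx.1 hTX, ?_⟩, by rw [card_insert_of_notMem hx.2, hc]⟩
    intro u hu v hv huv
    by_cases hvT : v ∈ T
    · exact mem_insert_of_mem hvT
    rcases mem_insert.1 hu with rfl | hu
    · have := hf (le_antisymm huv (hmax v (mem_sdiff.2 ⟨hv, hvT⟩)))
      simp [this]
    · exact mem_insert_of_mem (hT u hu v hv huv)

lemma IsSegment.subset_of_card_le (hS : IsSegment f X S) (hT : IsSegment f X T)
    (h : #S ≤ #T) : S ⊆ T := by
  by_contra hst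
  obtain ⟨s, hs, hsT⟩ := not_subset.1 hst
  have hTS : T ⊆ S := fun t ht => by
    rcases le_total (f t) (f s) with hle | hle
    · exact absurd (hT.2 t ht s (hS.1 hs) hle) hsT
    · exact hS.2 s hs t (hT.1 ht) hle
  have := card_lt_card ⟨hTS, hst⟩
  omega

lemma IsSegment.card_union_le [DecidableEq β] (hS : IsSegment f X S) (hT : IsSegment f X T) :
    #(S ∪ T) ≤ max #S #T := by
  rcases le_total #S #T with h | h
  · rw [union_eq_right.2 (hS.subset_of_card_le hT h)]
    exact le_max_right _ _
  · rw [union_eq_left.2 (hT.subset_of_card_le hS h)]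
    exact le_max_left _ _

lemma IsSegment.sum_lt [DecidableEq β] (hT : IsSegment f X T) (hS : S ⊆ X) (hc : #T = #S)
    (hne : S ≠ T) {ρ : β → ℕ} (hρ : ∀ u ∈ X, ∀ v ∈ X, f u < f v → ρ v < ρ u) :
    ∑ u ∈ T, ρ u < ∑ u ∈ S, ρ u := by
  have hcd : #(T \ S) = #(S \ T) := by
    have h1 := card_sdiff_add_card_inter T S
    have h2 := card_sdiff_add_card_inter S T
    rw [inter_comm] at h2
    omega
  have hSne : (S \ T).Nonempty := by
    rw [sdiff_nonempty]
    exact fun h => hne (eq_of_subset_of_card_le h hc.le)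
  have hTne : (T \ S).Nonempty := by
    rw [← card_pos, hcd, card_pos]
    exact hSne
  obtain ⟨s, hs, hmin⟩ := exists_min_image (S \ T) ρ hSne
  have hlt : ∑ u ∈ T \ S, ρ u < ∑ u ∈ S \ T, ρ u := by
    calc ∑ u ∈ T \ S, ρ u < ∑ u ∈ T \ S, ρ s := by
          refine sum_lt_sum_of_nonempty hTne fun t ht => ?_
          rw [mem_sdiff] at hs ht
          refine hρ s (hS hs.1) t (hT.1 ht.1) (lt_of_not_ge fun hle => hs.2 ?_)
          exact hT.2 t ht.1 s (hS hs.1) hle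
      _ = #(S \ T) • ρ s := by rw [sum_const, hcd]
      _ ≤ _ := card_nsmul_le_sum _ _ _ hmin
  have h1 := sum_inter_add_sum_sdiff T S ρ
  have h2 := sum_inter_add_sum_sdiff S T ρ
  rw [inter_comm] at h2
  omega

end Segments

variable {n h : ℕ}

/-- The vectors of `ℕ^n` with coordinate sum `h`. -/
def layer (n h : ℕ) : Finset (Fin n → ℕ) := univ.piAntidiag h

@[simp] lemma mem_layer {u : Fin n → ℕ} : u ∈ layer n h ↔ ∑ j, u j = h := by
  simp [layer]

/-- The upper shadow `A + {e_1, …, e_n}`. -/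
def upShadow (A : Finset (Fin n → ℕ)) : Finset (Fin n → ℕ) :=
  A + univ.image (fun j : Fin n => (Pi.single j 1 : Fin n → ℕ))

lemma mem_upShadow {A : Finset (Fin n → ℕ)} {w : Fin n → ℕ} :
    w ∈ upShadow A ↔ ∃ u ∈ A, ∃ j, u + Pi.single j 1 = w := by
  simp [upShadow, mem_add]

lemma sum_add_single (u : Fin n → ℕ) (j : Fin n) :
    ∑ i, (u + Pi.single j 1 : Fin n → ℕ) i = ∑ i, u i + 1 := by
  simp [sum_add_distrib]

lemma upShadow_subset_layer {A : Finset (Fin n → ℕ)} (hA : A ⊆ layer n h) :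
    upShadow A ⊆ layer n (h + 1) := by
  intro w hw
  obtain ⟨u, hu, j, rfl⟩ := mem_upShadow.1 hw
  rw [mem_layer, sum_add_single, mem_layer.1 (hA hu)]

/-- Initial segments of a layer for the lexicographic order. -/
abbrev IsLexSegment (h : ℕ) (L : Finset (Fin n → ℕ)) : Prop :=
  IsSegment (toLex : (Fin n → ℕ) → Lex (Fin n → ℕ)) (layer n h) L

lemma toLex_lt_iff {u v : Fin n → ℕ} :
    toLex u < toLex v ↔ ∃ j, (∀ k < j, u k = v k) ∧ u j < v j := Iff.rfl

lemma IsLexSegment.upShadow {L : Finset (Fin n → ℕ)} (hL : IsLexSegment h L) :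
    IsLexSegment (h + 1) (upShadow L) := by
  refine ⟨upShadow_subset_layer hL.1, fun w hw w' hw' hle => ?_⟩
  rcases hle.eq_or_lt with heq | hlt
  · rwa [← toLex.injective heq]
  obtain ⟨u, hu, j, rfl⟩ := mem_upShadow.1 hw
  obtain ⟨j₀, heq, hj₀⟩ := toLex_lt_iff.1 hlt
  have huw : ∀ k, u k ≤ (u + Pi.single j 1 : Fin n → ℕ) k := fun k => Nat.le_add_right _ _
  have hne : (univ.filter fun k => w' k ≠ 0).Nonempty := ⟨j₀, by simp; omega⟩
  obtain ⟨i, hi, himax⟩ := exists_max_image _ id hne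
  simp only [mem_filter, mem_univ, true_and, id] at hi himax
  have hji : j₀ ≤ i := himax j₀ (by omega)
  obtain ⟨u', rfl⟩ : ∃ u' : Fin n → ℕ, w' = u' + Pi.single i 1 := by
    refine ⟨w' - Pi.single i 1, ?_⟩
    ext k
    by_cases hk : k = i
    · subst hk
      simp
      omega
    · simp [hk]
  have hu' : ∑ k, u' k = h := by
    rw [mem_layer, sum_add_single] at hw'
    omega
  have hus := mem_layer.1 (hL.1 hu)
  refine mem_upShadow.2 ⟨u', hL.2 u hu u' (mem_layer.2 hu') ?_, i, rfl⟩
  by_contra hcon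
  obtain ⟨k, hkeq, hk⟩ := toLex_lt_iff.1 (not_le.1 hcon)
  have hval : ∀ l, l ≠ i → (u' + Pi.single i 1 : Fin n → ℕ) l = u' l := fun l hl => by simp [hl]
  have hvi : (u' + Pi.single i 1 : Fin n → ℕ) i = u' i + 1 := by simp
  have hk1 := huw k
  have hkj : j₀ < k := by
    by_contra! hkj
    rcases hkj.eq_or_lt with rfl | hkj
    · by_cases hki : k = i
      · subst hki
        omega
      · rw [hval k hki] at hj₀
        omega
    · have h1 := heq k hkj
      rw [hval k (hkj.trans_le hji).ne] at h1
      omega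
  have hij : i = j₀ := by
    by_contra hij
    have h1 := huw j₀
    have h2 := hkeq j₀ hkj
    rw [hval j₀ (Ne.symm hij)] at hj₀
    omega
  have : ∑ l, u' l < ∑ l, u l := by
    refine sum_lt_sum (fun l _ => ?_) ⟨k, mem_univ _, hk⟩
    rcases lt_or_ge l k with hl | hl
    · exact (hkeq l hl).le
    · have hil : i < l := by rw [hij]; exact hkj.trans_le hl
      have : u' l = 0 := by
        by_contra h0
        exact absurd (himax l (by rw [hval l hil.ne']; exact h0)) (not_le.2 hil)
      omega
  omega

/-- The vector with `i`-th coordinate `k` and remaining coordinates `w`. -/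
def ins (i : Fin (n + 1)) (k : ℕ) (w : Fin n → ℕ) : Fin (n + 1) → ℕ :=
  Fin.insertNth (α := fun _ => ℕ) i k w

@[simp] lemma ins_same (i : Fin (n + 1)) (k : ℕ) (w : Fin n → ℕ) : ins i k w i = k := by
  simp [ins]

@[simp] lemma ins_succAbove (i : Fin (n + 1)) (k : ℕ) (w : Fin n → ℕ) (j : Fin n) :
    ins i k w (i.succAbove j) = w j := by
  simp [ins]

lemma ins_removeNth (i : Fin (n + 1)) (u : Fin (n + 1) → ℕ) :
    ins i (u i) (i.removeNth u) = u := by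
  simp [ins]

@[simp] lemma removeNth_ins (i : Fin (n + 1)) (k : ℕ) (w : Fin n → ℕ) :
    i.removeNth (ins i k w) = w := by
  ext j
  simp [Fin.removeNth]

lemma ins_inj {i : Fin (n + 1)} {k k' : ℕ} {w w' : Fin n → ℕ} :
    ins i k w = ins i k' w' ↔ k = k' ∧ w = w' := by
  constructor
  · intro e
    exact ⟨by simpa using congrFun e i, by simpa using congrArg i.removeNth e⟩
  · rintro ⟨rfl, rfl⟩
    rfl

lemma sum_ins (i : Fin (n + 1)) (k : ℕ) (w : Fin n → ℕ) :
    ∑ j, ins i k w j = k + ∑ j, w j := by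
  simp [Fin.sum_univ_succAbove _ i]

lemma ins_add_single_same (i : Fin (n + 1)) (k : ℕ) (w : Fin n → ℕ) :
    ins i k w + Pi.single i 1 = ins i (k + 1) w := by
  ext j
  rcases Fin.eq_self_or_eq_succAbove i j with rfl | ⟨j, rfl⟩ <;> simp [Fin.succAbove_ne]

lemma ins_add_single_succAbove (i : Fin (n + 1)) (k : ℕ) (w : Fin n → ℕ) (l : Fin n) :
    ins i k w + Pi.single (i.succAbove l) 1 = ins i k (w + Pi.single l 1) := by
  ext j
  rcases Fin.eq_self_or_eq_succAbove i j with rfl | ⟨j, rfl⟩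
  · simp [Fin.ne_succAbove]
  · simp [Pi.single_apply]

lemma toLex_ins_lt {i : Fin (n + 1)} {k : ℕ} {v w : Fin n → ℕ} :
    toLex (ins i k v) < toLex (ins i k w) ↔ toLex v < toLex w := by
  simp [toLex_lt_iff, Fin.exists_iff_succAbove i, Fin.forall_iff_succAbove i,
    Fin.succAbove_lt_succAbove_iff]

lemma toLex_ins_le {i : Fin (n + 1)} {k : ℕ} {v w : Fin n → ℕ} :
    toLex (ins i k v) ≤ toLex (ins i k w) ↔ toLex v ≤ toLex w := by
  rw [← not_lt, ← not_lt]
  exact not_congr toLex_ins_lt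

/-- The slice of `A` on which the `i`-th coordinate equals `k`. -/
def slice (i : Fin (n + 1)) (k : ℕ) (A : Finset (Fin (n + 1) → ℕ)) : Finset (Fin n → ℕ) :=
  (A.filter fun u => u i = k).image i.removeNth

lemma mem_slice {i : Fin (n + 1)} {k : ℕ} {A : Finset (Fin (n + 1) → ℕ)} {w : Fin n → ℕ} :
    w ∈ slice i k A ↔ ins i k w ∈ A := by
  simp only [slice, mem_image, mem_filter]
  constructor
  · rintro ⟨u, ⟨hu, rfl⟩, rfl⟩
    rwa [ins_removeNth]
  · exact fun hw => ⟨_, ⟨hw, by simp⟩, by simp⟩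

lemma slice_subset_layer {A : Finset (Fin (n + 1) → ℕ)} (hA : A ⊆ layer (n + 1) h)
    (i : Fin (n + 1)) (k : ℕ) : slice i k A ⊆ layer n (h - k) := by
  intro w hw
  have := mem_layer.1 (hA (mem_slice.1 hw))
  rw [sum_ins] at this
  rw [mem_layer]
  omega

lemma slice_eq_empty {A : Finset (Fin (n + 1) → ℕ)} (hA : A ⊆ layer (n + 1) h)
    (i : Fin (n + 1)) {k : ℕ} (hk : h < k) : slice i k A = ∅ := by
  refine eq_empty_of_forall_notMem fun w hw => ?_
  have := mem_layer.1 (hA (mem_slice.1 hw))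
  rw [sum_ins] at this
  omega

lemma sum_eq_sum_slice {A : Finset (Fin (n + 1) → ℕ)} (hA : A ⊆ layer (n + 1) h)
    (i : Fin (n + 1)) (ρ : (Fin (n + 1) → ℕ) → ℕ) :
    ∑ u ∈ A, ρ u = ∑ k ∈ range (h + 1), ∑ w ∈ slice i k A, ρ (ins i k w) := by
  have hmaps : ∀ u ∈ A, u i ∈ range (h + 1) := fun u hu => by
    have h1 := mem_layer.1 (hA hu)
    have h2 := single_le_sum (f := u) (fun _ _ => Nat.zero_le _) (mem_univ i)
    rw [mem_range]
    omega
  rw [← sum_fiberwise_of_maps_to hmaps]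
  refine sum_congr rfl fun k _ => ?_
  refine sum_nbij' i.removeNth (ins i k) ?_ ?_ ?_ ?_ ?_
  · intro u hu
    exact mem_image_of_mem _ hu
  · intro w hw
    simpa using mem_slice.1 hw
  · intro u hu
    rw [← (mem_filter.1 hu).2, ins_removeNth]
  · simp
  · intro u hu
    rw [← (mem_filter.1 hu).2, ins_removeNth]

lemma card_eq_sum_slice {A : Finset (Fin (n + 1) → ℕ)} (hA : A ⊆ layer (n + 1) h)
    (i : Fin (n + 1)) : #A = ∑ k ∈ range (h + 1), #(slice i k A) := by
  simpa using sum_eq_sum_slice hA i fun _ => 1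

lemma mem_slice_upShadow {i : Fin (n + 1)} {k : ℕ} {A : Finset (Fin (n + 1) → ℕ)}
    {w : Fin n → ℕ} : w ∈ slice i k (upShadow A) ↔
      w ∈ upShadow (slice i k A) ∨ ∃ k', k' + 1 = k ∧ w ∈ slice i k' A := by
  simp only [mem_slice, mem_upShadow]
  constructor
  · rintro ⟨u, hu, j, hj⟩
    rw [← ins_removeNth i u] at hu hj
    rcases Fin.eq_self_or_eq_succAbove i j with rfl | ⟨l, rfl⟩
    · rw [ins_add_single_same, ins_inj] at hj
      obtain ⟨h1, h2⟩ := hj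
      exact Or.inr ⟨_, h1, h2 ▸ hu⟩
    · rw [ins_add_single_succAbove, ins_inj] at hj
      obtain ⟨h1, h2⟩ := hj
      exact Or.inl ⟨_, h1 ▸ hu, l, h2⟩
  · rintro (⟨u, hu, l, rfl⟩ | ⟨k', rfl, hw⟩)
    · exact ⟨_, hu, _, ins_add_single_succAbove i k u l⟩
    · exact ⟨_, hw, i, ins_add_single_same i k' w⟩

lemma slice_zero_upShadow (i : Fin (n + 1)) (A : Finset (Fin (n + 1) → ℕ)) :
    slice i 0 (upShadow A) = upShadow (slice i 0 A) := by
  ext w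
  simp [mem_slice_upShadow]

lemma slice_succ_upShadow (i : Fin (n + 1)) (k : ℕ) (A : Finset (Fin (n + 1) → ℕ)) :
    slice i (k + 1) (upShadow A) = upShadow (slice i (k + 1) A) ∪ slice i k A := by
  ext w
  simp [mem_slice_upShadow]

lemma card_upShadow_eq {A : Finset (Fin (n + 1) → ℕ)} (hA : A ⊆ layer (n + 1) h)
    (i : Fin (n + 1)) : #(upShadow A) = #(upShadow (slice i 0 A)) +
      ∑ k ∈ range (h + 1), #(upShadow (slice i (k + 1) A) ∪ slice i k A) := by
  rw [card_eq_sum_slice (upShadow_subset_layer hA) i, sum_range_succ', slice_zero_upShadow,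
    add_comm]
  simp only [slice_succ_upShadow]

lemma card_add_card_le_card_upShadow {A : Finset (Fin (n + 1) → ℕ)} (hA : A ⊆ layer (n + 1) h)
    (i : Fin (n + 1)) : #A + #(upShadow (slice i 0 A)) ≤ #(upShadow A) := by
  rw [card_upShadow_eq hA i, card_eq_sum_slice hA i, add_comm]
  gcongr
  exact subset_union_right

lemma IsLexSegment.card_upShadow_le {L : Finset (Fin (n + 1) → ℕ)} (hL : IsLexSegment h L) :
    #(LexSegment.upShadow L) ≤ #L + #(LexSegment.upShadow (slice (Fin.last n) 0 L)) := by
  rw [card_upShadow_eq hL.1 (Fin.last n), card_eq_sum_slice hL.1 (Fin.last n), add_comm]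
  gcongr with k
  refine union_subset (fun w hw => ?_) subset_rfl
  obtain ⟨u, hu, j, rfl⟩ := mem_upShadow.1 hw
  rw [mem_slice] at hu ⊢
  have hs := mem_layer.1 (hL.1 hu)
  refine hL.2 _ hu _ ?_ (le_of_lt ?_)
  · rw [sum_ins] at hs
    rw [mem_layer, sum_ins, sum_add_single]
    omega
  · refine toLex_lt_iff.2 ⟨(Fin.last n).succAbove j, fun l hl => ?_, ?_⟩
    · rcases Fin.eq_self_or_eq_succAbove (Fin.last n) l with rfl | ⟨l, rfl⟩
      · exact absurd hl (not_lt.2 (Fin.le_last _))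
      · rw [Fin.succAbove_lt_succAbove_iff] at hl
        rw [ins_succAbove, ins_succAbove]
        simp [hl.ne]
    · rw [ins_succAbove, ins_succAbove]
      simp

/-- Every slice of `A` in direction `i` is a lexicographic segment of its layer. -/
def Compressed (h : ℕ) (i : Fin (n + 1)) (A : Finset (Fin (n + 1) → ℕ)) : Prop :=
  ∀ k, IsLexSegment (h - k) (slice i k A)

lemma Compressed.mem {A : Finset (Fin (n + 1) → ℕ)} {i : Fin (n + 1)} (hA : Compressed h i A)
    {u v : Fin (n + 1) → ℕ} (hu : u ∈ A) (hv : v ∈ layer (n + 1) h) (hi : u i = v i)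
    (huv : toLex u ≤ toLex v) : v ∈ A := by
  rw [← ins_removeNth i u] at hu
  rw [← ins_removeNth i u, ← ins_removeNth i v, hi, toLex_ins_le] at huv
  rw [← ins_removeNth i v, mem_layer, sum_ins] at hv
  rw [hi] at hu
  rw [← ins_removeNth i v]
  refine mem_slice.1 ((hA (v i)).2 _ (mem_slice.2 hu) _ (mem_layer.2 ?_) huv)
  omega

open Classical in
/-- Number of vectors of the layer that lexicographically exceed `u`. -/
noncomputable def rank (h : ℕ) (u : Fin n → ℕ) : ℕ := #((layer n h).filter fun w => toLex u < toLex w)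

lemma rank_lt_rank {u v : Fin n → ℕ} (hv : v ∈ layer n h) (huv : toLex u < toLex v) :
    rank h v < rank h u := by
  classical
  unfold rank
  refine card_lt_card ⟨fun w hw => ?_, fun hsub => ?_⟩
  · rw [mem_filter] at hw ⊢
    exact ⟨hw.1, huv.trans hw.2⟩
  · have := hsub (mem_filter.2 ⟨hv, huv⟩)
    exact lt_irrefl _ (mem_filter.1 this).2

/-- Lexicographic segments of `ℕ^n` have the smallest upper shadows. -/
def SegmentsMinimizeUpShadow (n : ℕ) : Prop :=
  ∀ (h : ℕ) (A L : Finset (Fin n → ℕ)), A ⊆ layer n h → IsLexSegment h L → #L ≤ #A →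
    #(upShadow L) ≤ #(upShadow A)

lemma exists_slices_eq {A : Finset (Fin (n + 1) → ℕ)} (hA : A ⊆ layer (n + 1) h)
    (i : Fin (n + 1)) : ∃ C ⊆ layer (n + 1) h, Compressed h i C ∧
      ∀ k, #(slice i k C) = #(slice i k A) := by
  classical
  choose T hT hTc using fun k => exists_isSegment
    (toLex : (Fin n → ℕ) ≃ Lex (Fin n → ℕ)).injective (layer n (h - k)) #(slice i k A)
    (card_le_card (slice_subset_layer hA i k))
  have hslice : ∀ k, slice i k ((layer (n + 1) h).filter fun u : Fin (n + 1) → ℕ => i.removeNth u ∈ T (u i))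
      = T k := by
    intro k
    ext w
    simp only [mem_slice, mem_filter, mem_layer, sum_ins, ins_same, removeNth_ins,
      and_iff_right_iff_imp]
    intro hw
    have h1 := mem_layer.1 ((hT k).1 hw)
    have hk : k ≤ h := by
      by_contra! hk
      have h2 := hTc k
      rw [slice_eq_empty hA i hk, card_empty, card_eq_zero] at h2
      simp [h2] at hw
    omega
  refine ⟨(layer (n + 1) h).filter fun u => i.removeNth u ∈ T (u i), filter_subset _ _,
    fun k => ?_, fun k => ?_⟩
  · rw [hslice]
    exact hT k
  · rw [hslice, hTc]

lemma Compressed.card_upShadow_le (hn : SegmentsMinimizeUpShadow n)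
    {A C : Finset (Fin (n + 1) → ℕ)} (hA : A ⊆ layer (n + 1) h) (hC : C ⊆ layer (n + 1) h)
    {i : Fin (n + 1)} (hCi : Compressed h i C) (hCA : ∀ k, #(slice i k C) = #(slice i k A)) :
    #(upShadow C) ≤ #(upShadow A) := by
  have key : ∀ k, #(upShadow (slice i k C)) ≤ #(upShadow (slice i k A)) := fun k =>
    hn _ _ _ (slice_subset_layer hA i k) (hCi k) (hCA k).le
  rw [card_upShadow_eq hC i, card_upShadow_eq hA i]
  refine add_le_add (key 0) (sum_le_sum fun k hk => ?_)
  rw [mem_range] at hk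
  refine le_trans (b := max #(upShadow (slice i (k + 1) C)) #(slice i k C)) ?_ (max_le ?_ ?_)
  · rcases Nat.lt_or_ge k h with hkh | hkh
    · have := IsLexSegment.upShadow (hCi (k + 1))
      rw [show h - (k + 1) + 1 = h - k by omega] at this
      exact this.card_union_le (hCi k)
    · rw [slice_eq_empty hC i (by omega : h < k + 1)]
      simp [upShadow]
  · exact (key _).trans (card_le_card subset_union_left)
  · rw [hCA]
    exact card_le_card subset_union_right

lemma sum_rank_lt {A C : Finset (Fin (n + 1) → ℕ)} (hA : A ⊆ layer (n + 1) h)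
    (hC : C ⊆ layer (n + 1) h) {i : Fin (n + 1)} (hCi : Compressed h i C)
    (hCA : ∀ k, #(slice i k C) = #(slice i k A)) (hAi : ¬ Compressed h i A) :
    ∑ u ∈ C, rank h u < ∑ u ∈ A, rank h u := by
  rw [sum_eq_sum_slice hC i, sum_eq_sum_slice hA i]
  have key : ∀ k ≤ h, slice i k A ≠ slice i k C →
      ∑ w ∈ slice i k C, rank h (ins i k w) < ∑ w ∈ slice i k A, rank h (ins i k w) := by
    intro k hk hne
    refine (hCi k).sum_lt (slice_subset_layer hA i k) (hCA k) hne fun u _ v hv huv => ?_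
    refine rank_lt_rank ?_ (toLex_ins_lt.2 huv)
    rw [mem_layer] at hv
    rw [mem_layer, sum_ins]
    omega
  obtain ⟨k, hk⟩ : ∃ k, slice i k A ≠ slice i k C := by
    by_contra! hcon
    exact hAi fun k => by rw [hcon k]; exact hCi k
  have hkh : k ≤ h := by
    by_contra! hkh
    exact hk (by rw [slice_eq_empty hA i hkh, slice_eq_empty hC i hkh])
  refine sum_lt_sum (fun l hl => ?_) ⟨k, by simp; omega, key k hkh hk⟩
  rw [mem_range] at hl
  by_cases hne : slice i l A = slice i l C
  · rw [hne]
  · exact (key l (by omega) hne).le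

lemma exists_compressed (hn : SegmentsMinimizeUpShadow n) (A : Finset (Fin (n + 1) → ℕ))
    (hA : A ⊆ layer (n + 1) h) : ∃ C ⊆ layer (n + 1) h, #C = #A ∧
      #(upShadow C) ≤ #(upShadow A) ∧ ∀ i, Compressed h i C := by
  induction hN : ∑ u ∈ A, rank h u using Nat.strong_induction_on generalizing A with
  | _ N ih =>
    by_cases hcomp : ∀ i, Compressed h i A
    · exact ⟨A, hA, rfl, le_rfl, hcomp⟩
    obtain ⟨i, hi⟩ := not_forall.1 hcomp
    obtain ⟨D, hD, hDi, hDA⟩ := exists_slices_eq hA i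
    obtain ⟨C, hC, h1, h2, h3⟩ := ih _ (hN ▸ sum_rank_lt hA hD hDi hDA hi) D hD rfl
    refine ⟨C, hC, h1.trans ?_, h2.trans (hDi.card_upShadow_le hn hA hD hDA), h3⟩
    rw [card_eq_sum_slice hD i, card_eq_sum_slice hA i]
    exact sum_congr rfl fun k _ => hDA k

lemma card_slice_last_le {A L : Finset (Fin (n + 3) → ℕ)} (hA : A ⊆ layer (n + 3) h)
    (hcomp : ∀ i, Compressed h i A) (hL : IsLexSegment h L) (hc : #L ≤ #A) :
    #(slice (Fin.last (n + 2)) 0 L) ≤ #(slice (Fin.last (n + 2)) 0 A) := by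
  by_contra! hlt
  obtain ⟨v₀, hvL, hvA⟩ := exists_mem_notMem_of_card_lt_card hlt
  rw [mem_slice] at hvL hvA
  set v := ins (Fin.last (n + 2)) 0 v₀ with hv
  have hvlast : v (Fin.last (n + 2)) = 0 := by simp [hv]
  have hvs := mem_layer.1 (hL.1 hvL)
  have hsub : A ⊆ L := by
    intro w hw
    have hws := mem_layer.1 (hA hw)
    let p : Fin (n + 3) := (Fin.last (n + 1)).castSucc
    have hp : ∀ l : Fin (n + 3), l < p ∨ l = p ∨ l = Fin.last (n + 2) := fun l => by
      simp only [p, Fin.lt_def, Fin.ext_iff, Fin.val_castSucc, Fin.val_last]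
      omega
    have hplast : p ≠ Fin.last (n + 2) := (Fin.castSucc_lt_last _).ne
    let w' : Fin (n + 3) → ℕ := fun l =>
      if l = p then w p + w (Fin.last (n + 2)) else if l = Fin.last (n + 2) then 0 else w l
    have hlow : ∀ l < p, w' l = w l := fun l hl => by
      have : l ≠ Fin.last (n + 2) := (hl.trans (Fin.castSucc_lt_last _)).ne
      simp [w', hl.ne, this]
    have hw'p : w' p = w p + w (Fin.last (n + 2)) := by simp [w']
    have hw'l : w' (Fin.last (n + 2)) = 0 := by simp [w', hplast.symm]
    have hsplit : ∀ x : Fin (n + 3) → ℕ, ∑ l, x l =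
        ∑ l : Fin (n + 1), x l.castSucc.castSucc + x p + x (Fin.last (n + 2)) := fun x => by
      rw [Fin.sum_univ_castSucc, Fin.sum_univ_castSucc]
    have hcs : ∀ l : Fin (n + 1), l.castSucc.castSucc < p := fun l =>
      Fin.castSucc_lt_castSucc_iff.2 (Fin.castSucc_lt_last l)
    have hw's : ∑ l, w' l = h := by
      rw [hsplit] at hws ⊢
      rw [hw'p, hw'l, sum_congr rfl fun l _ => hlow _ (hcs l)]
      omega
    have hww' : toLex w ≤ toLex w' := by
      rcases Nat.eq_zero_or_pos (w (Fin.last (n + 2))) with h0 | h0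
      · refine le_of_eq (congrArg toLex (funext fun l => ?_))
        rcases hp l with hl | rfl | rfl
        · rw [hlow l hl]
        · omega
        · omega
      · exact le_of_lt (toLex_lt_iff.2 ⟨p, fun l hl => (hlow l hl).symm, by omega⟩)
    have hw'A : w' ∈ A := (hcomp 0).mem hw (mem_layer.2 hw's)
      (hlow 0 (by simp [p, Fin.lt_def])).symm hww'
    have hvw' : toLex v < toLex w' := by
      by_contra hle
      exact hvA ((hcomp (Fin.last (n + 2))).mem hw'A (hL.1 hvL) (by rw [hw'l, hvlast])
        (not_lt.1 hle))
    refine hL.2 v hvL w (hA hw) (le_of_lt ?_)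
    obtain ⟨j, hjeq, hj⟩ := toLex_lt_iff.1 hvw'
    rcases hp j with hjp | rfl | rfl
    · refine toLex_lt_iff.2 ⟨j, fun l hl => ?_, ?_⟩
      · rw [hjeq l hl, hlow l (hl.trans hjp)]
      · rwa [hlow j hjp] at hj
    · rw [hsplit] at hvs hw's
      rw [sum_congr rfl fun l _ => hjeq _ (hcs l)] at hvs
      omega
    · omega
  exact absurd (card_lt_card ⟨hsub, fun hLA => hvA (hLA hvL)⟩) (by omega)

lemma card_lt_card_upShadow {A : Finset (Fin (n + 2) → ℕ)} (hA : A.Nonempty) :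
    #A < #(upShadow A) := by
  obtain ⟨m, hm, hmax⟩ := exists_max_image A (fun u => u 0) hA
  rw [← card_image_of_injective A (add_left_injective (Pi.single (Fin.last (n + 1)) 1))]
  refine card_lt_card ⟨fun w hw => ?_, fun hsub => ?_⟩
  · obtain ⟨u, hu, rfl⟩ := mem_image.1 hw
    exact mem_upShadow.2 ⟨u, hu, _, rfl⟩
  · obtain ⟨u, hu, he⟩ := mem_image.1 (hsub (mem_upShadow.2 ⟨m, hm, 0, rfl⟩))
    have h1 := congrFun he 0
    have h2 := hmax u hu
    have h3 : (0 : Fin (n + 2)) ≠ Fin.last (n + 1) := (Fin.last_pos).ne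
    simp [h3] at h1
    omega

theorem segmentsMinimizeUpShadow (n : ℕ) : SegmentsMinimizeUpShadow n := by
  induction n with
  | zero =>
    intro h A L _ _ _
    simp [upShadow]
  | succ n ih =>
    intro h A L hA hL hc
    have hLle := hL.card_upShadow_le
    match n, ih with
    | 0, _ =>
      have h1 := card_add_card_le_card_upShadow hA 0
      have h2 : #(upShadow (slice (Fin.last 0) 0 L)) = 0 := by simp [upShadow]
      omega
    | 1, _ =>
      rcases L.eq_empty_or_nonempty with rfl | hne
      · simp [upShadow]
      have h1 := card_lt_card_upShadow (card_pos.1 (hne.card_pos.trans_le hc))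
      have h2 : #(upShadow (slice (Fin.last 1) 0 L)) ≤ 1 := by
        refine card_le_one.2 fun u hu v hv => ?_
        have hsub := upShadow_subset_layer (slice_subset_layer hL.1 (Fin.last 1) 0)
        have hu := mem_layer.1 (hsub hu)
        have hv := mem_layer.1 (hsub hv)
        ext l
        rw [Subsingleton.elim l 0]
        simp only [Fin.sum_univ_one] at hu hv
        omega
      omega
    | n + 2, ih =>
      obtain ⟨C, hC, hCA, hsh, hcomp⟩ := exists_compressed ih A hA
      have h1 := card_add_card_le_card_upShadow hC (Fin.last (n + 2))
      have hL₀ : IsLexSegment h (slice (Fin.last (n + 2)) 0 L) := by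
        refine ⟨slice_subset_layer hL.1 _ 0, fun u hu v hv huv => ?_⟩
        refine mem_slice.2 (hL.2 _ (mem_slice.1 hu) _ ?_ (toLex_ins_le.2 huv))
        rw [mem_layer] at hv ⊢
        rw [sum_ins, hv, zero_add]
      have h2 := ih _ _ _ (slice_subset_layer hC (Fin.last (n + 2)) 0) hL₀
        (card_slice_last_le hC hcomp hL (hc.trans hCA.ge))
      omega

lemma vlexLe_iff {u v : Fin n → ℕ} : vlexLe v u ↔ toLex v ≤ toLex u := by
  rw [le_iff_eq_or_lt, toLex_inj, vlexLe]
  refine or_congr_right (Iff.trans ?_ toLex_lt_iff.symm)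
  simp only [and_comm]

end LexSegment

/-- Additive version of Macaulay's theorem. Let `G = ℕ^n` and `B = {e_1,…,e_n} ⊂ G`,
the canonical basis vectors. For all `h ≥ 1` and all subsets `A ⊆ hB` (vectors of
coordinate sum `h`), we have `|A + B| ≥ |A^lex + B|`, where `A^lex ⊆ hB` is the
initial segment `{u ∈ hB : u ≥ v}` (for suitable `v ∈ hB`) of cardinality `|A|`
with respect to the lexicographic order. -/
theorem stmt6 (n h : ℕ) (hh : 1 ≤ h) (A Alex : Finset (Fin n → ℕ))
    (hA : ∀ u ∈ A, ∑ j, u j = h)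
    (v : Fin n → ℕ) (hv : ∑ j, v j = h)
    (hAlex : ∀ u : Fin n → ℕ, u ∈ Alex ↔ ((∑ j, u j = h) ∧ vlexLe v u))
    (hcard : Alex.card = A.card) :
    (Alex + Finset.image (fun j : Fin n => (Pi.single j 1 : Fin n → ℕ)) Finset.univ).card
      ≤ (A + Finset.image (fun j : Fin n => (Pi.single j 1 : Fin n → ℕ)) Finset.univ).card := by
  refine LexSegment.segmentsMinimizeUpShadow n h A Alex (fun u hu => ?_)
    ⟨fun u hu => ?_, ?_⟩ hcard.le
  · exact LexSegment.mem_layer.2 (hA u hu)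
  · exact LexSegment.mem_layer.2 ((hAlex u).1 hu).1
  · intro u hu w hw huw
    exact (hAlex w).2 ⟨LexSegment.mem_layer.1 hw,
      LexSegment.vlexLe_iff.2 ((LexSegment.vlexLe_iff.1 ((hAlex u).1 hu).2).trans huw)⟩
end
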